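/- Let n be a positive integer with ⌈2n/3⌉ ≥ 2. If G is a connected simple graph on n vertices with dissociation number ⌈2n/3⌉ that attains the minimum spectral radius among all connected simple graphs on n vertices with dissociation number ⌈2n/3⌉, then G is isomorphic to the path P_n. -/

import Mathlib

/-- `S` is a dissociation set of `G`: the subgraph induced by `S` has maximum degree ≤ 1. -/
def IsDissocSet {V : Type} (G : SimpleGraph V) (S : Set V) : Prop :=
  ∀ v ∈ S, ({u ∈ S | G.Adj v u}).ncard ≤ 1

/-- The dissociation number of `G`: the maximum cardinality of a dissociation set. -/
noncomputable def dissNum {V : Type} [Fintype V] (G : SimpleGraph V) : ℕ :=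
  sSup {k | ∃ S : Set V, IsDissocSet G S ∧ S.ncard = k}

open scoped Classical in
/-- The (real) adjacency matrix of a simple graph. -/
noncomputable def adjMat {V : Type} [Fintype V] (G : SimpleGraph V) : Matrix V V ℝ :=
  Matrix.of fun i j => if G.Adj i j then 1 else 0

/-- The spectral radius of a simple graph: the largest eigenvalue of its adjacency matrix. -/
noncomputable def specRad {V : Type} [Fintype V] (G : SimpleGraph V) : ℝ :=
  sSup {t : ℝ | ∃ v : V → ℝ, v ≠ 0 ∧ (adjMat G).mulVec v = t • v}

/-!
By Perron–Frobenius, a connected graph `G` on `n` vertices whose spectral radius is at most that of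
`P_n`, namely `2 cos θ` with `θ = π / (n + 1)`, has a positive vector `x` with `A x ≤ (2 cos θ) x`.
In a path with `k` vertices rooted at one of its ends, the vector satisfying the eigenvalue equation
for `2 cos θ` off the root has ratio `q_k = sin ((k - 1) θ) / sin (k θ)` between its entries at the
neighbour of the root and at the root. Paths minimise this ratio: in any connected graph with
`m ≤ n` vertices, a nonnegative `x` with `A x ≤ (2 cos θ) x` off the root `r` satisfies
`(A x) r ≥ q_m x r`. Indeed, cut an edge `r a` of a spanning tree to obtain connected parts with `k`
vertices (containing `a`) and `l` vertices (containing `r`). Since `1 / q_{k+1} = 2 cos θ - q_k`,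
induction gives `x a ≥ q_{k+1} x r`, hence `(A x) r ≥ (q_{k+1} + q_l) x r`, and
`q_{k+l} ≤ q_{k+1} + q_l` follows from a sine identity, strictly for `l ≥ 2` and `k + l < n`. As
`q_n = 2 cos θ`, rooting `G` at a non-cut vertex forces equality at every step, and the vertices are
peeled off one at a time along a path.
-/

section PathRatio

/-- In the eigenvector `i ↦ sin (i * θ)` of a path for the eigenvalue `2 * cos θ`, the entry at
position `k - 1` divided by the one at position `k`. Read from the root, this is the ratio between
the second and the first entry of a path with `k` vertices rooted at an end. -/
noncomputable def pathRatio (θ : ℝ) (k : ℕ) : ℝ :=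
  Real.sin ((k - 1) * θ) / Real.sin (k * θ)

variable {θ : ℝ}

lemma sin_natCast_mul_pos (hθ : 0 < θ) {k : ℕ} (hk : 0 < k) (hkθ : k * θ < Real.pi) :
    0 < Real.sin (k * θ) :=
  Real.sin_pos_of_pos_of_lt_pi (by positivity) hkθ

lemma sin_natCast_mul_nonneg (hθ : 0 ≤ θ) {k : ℕ} (hkθ : k * θ ≤ Real.pi) :
    0 ≤ Real.sin (k * θ) :=
  Real.sin_nonneg_of_nonneg_of_le_pi (by positivity) hkθ

lemma pathRatio_one (θ : ℝ) : pathRatio θ 1 = 0 := by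
  simp [pathRatio]

lemma pathRatio_pos (hθ : 0 < θ) {k : ℕ} (hk : 2 ≤ k) (hkθ : k * θ < Real.pi) :
    0 < pathRatio θ k := by
  have hpred : 0 < Real.sin ((k - 1 : ℕ) * θ) :=
    sin_natCast_mul_pos hθ (by lia) (lt_of_le_of_lt (by gcongr; lia) hkθ)
  rw [Nat.cast_pred (by lia)] at hpred
  exact div_pos hpred (sin_natCast_mul_pos hθ (by lia) hkθ)

lemma two_mul_cos_sub_pathRatio {k : ℕ} (hk : Real.sin (k * θ) ≠ 0) :
    2 * Real.cos θ - pathRatio θ k = Real.sin ((k + 1) * θ) / Real.sin (k * θ) := by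
  rw [pathRatio, eq_div_iff hk, sub_mul, div_mul_cancel₀ _ hk, add_one_mul, sub_one_mul,
    Real.sin_add, Real.sin_sub]
  ring

lemma inv_pathRatio_succ {k : ℕ} (h : pathRatio θ (k + 1) ≠ 0) :
    (pathRatio θ (k + 1))⁻¹ = 2 * Real.cos θ - pathRatio θ k := by
  simp only [pathRatio, Nat.cast_add_one, add_sub_cancel_right] at h ⊢
  rw [inv_div, ← two_mul_cos_sub_pathRatio (div_ne_zero_iff.1 h).1, pathRatio]

lemma pathRatio_eq_two_mul_cos {k : ℕ} (hk : Real.sin (k * θ) ≠ 0)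
    (hkθ : (k + 1) * θ = Real.pi) : pathRatio θ k = 2 * Real.cos θ := by
  have h := two_mul_cos_sub_pathRatio hk
  rw [hkθ, Real.sin_pi, zero_div] at h
  linarith

lemma sin_sub_div_sin_add {x y : ℝ} (hx : Real.sin x ≠ 0) (hy : Real.sin y ≠ 0)
    (hxy : Real.sin (x + y - θ) ≠ 0) :
    Real.sin (x - θ) / Real.sin x + Real.sin (y - θ) / Real.sin y =
      Real.sin (x + y - θ - θ) / Real.sin (x + y - θ) +
        Real.sin (x + y) * Real.sin (x - θ) * Real.sin (y - θ) /
          (Real.sin x * Real.sin y * Real.sin (x + y - θ)) := by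
  have hmul : Real.sin (x - θ) * Real.sin (y - θ) =
      Real.sin x * Real.sin y - Real.sin θ * Real.sin (x + y - θ) := by
    simp only [Real.sin_sub, Real.sin_add, Real.cos_add]
    linear_combination (Real.sin x * Real.sin y) * Real.sin_sq_add_cos_sq θ
  have hadd : Real.sin (x - θ) * Real.sin y + Real.sin x * Real.sin (y - θ) =
      2 * Real.cos θ * (Real.sin x * Real.sin y) - Real.sin θ * Real.sin (x + y) := by
    simp only [Real.sin_sub, Real.sin_add]
    ring
  have hrec : Real.sin (x + y - θ - θ) =
      2 * Real.cos θ * Real.sin (x + y - θ) - Real.sin (x + y) := by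
    nth_rw 3 [← sub_add_cancel (x + y) θ]
    rw [Real.sin_sub _ θ, Real.sin_add _ θ]
    ring
  rw [mul_assoc, hmul, hrec]
  field_simp
  linear_combination Real.sin (x + y - θ) * hadd

lemma pathRatio_succ_add {a b : ℕ} (ha : Real.sin ((a + 1 : ℕ) * θ) ≠ 0)
    (hb : Real.sin (b * θ) ≠ 0) (hab : Real.sin ((a + b : ℕ) * θ) ≠ 0) :
    pathRatio θ (a + 1) + pathRatio θ b = pathRatio θ (a + b) +
      Real.sin ((a + b + 1 : ℕ) * θ) * Real.sin (a * θ) * Real.sin ((b - 1) * θ) /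
        (Real.sin ((a + 1 : ℕ) * θ) * Real.sin (b * θ) * Real.sin ((a + b : ℕ) * θ)) := by
  have h := sin_sub_div_sin_add (θ := θ) ha hb
    (by convert hab using 2; push_cast; ring)
  simp only [pathRatio]
  convert h using 5 <;> push_cast <;> ring_nf

lemma pathRatio_add_le (hθ : 0 < θ) {a b : ℕ} (ha : 0 < a) (hb : 0 < b)
    (hab : (a + b + 1 : ℕ) * θ ≤ Real.pi) :
    pathRatio θ (a + b) ≤ pathRatio θ (a + 1) + pathRatio θ b := by
  have hpos {k : ℕ} (hk : 0 < k) (hkab : k < a + b + 1) : 0 < Real.sin (k * θ) :=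
    sin_natCast_mul_pos hθ hk (lt_of_lt_of_le (by gcongr) hab)
  have ha' := hpos ha (by lia)
  have ha1 := hpos (k := a + 1) (by lia) (by lia)
  have hb' := hpos hb (by lia)
  have hab' := hpos (k := a + b) (by lia) (by lia)
  have hb1 : 0 ≤ Real.sin ((b - 1 : ℕ) * θ) :=
    sin_natCast_mul_nonneg hθ.le (le_trans (by gcongr; lia) hab)
  have hab1 := sin_natCast_mul_nonneg hθ.le hab
  rw [Nat.cast_pred hb] at hb1
  rw [pathRatio_succ_add ha1.ne' hb'.ne' hab'.ne']
  exact le_add_of_nonneg_right (by positivity)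

lemma pathRatio_add_lt (hθ : 0 < θ) {a b : ℕ} (ha : 0 < a) (hb : 2 ≤ b)
    (hab : (a + b + 1 : ℕ) * θ < Real.pi) :
    pathRatio θ (a + b) < pathRatio θ (a + 1) + pathRatio θ b := by
  have hpos {k : ℕ} (hk : 0 < k) (hkab : k ≤ a + b + 1) : 0 < Real.sin (k * θ) :=
    sin_natCast_mul_pos hθ hk (lt_of_le_of_lt (by gcongr) hab)
  have ha' := hpos ha (by lia)
  have ha1 := hpos (k := a + 1) (by lia) (by lia)
  have hb' := hpos (k := b) (by lia) (by lia)
  have hb1 := hpos (k := b - 1) (by lia) (by lia)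
  have hab' := hpos (k := a + b) (by lia) (by lia)
  have hab1 := hpos (k := a + b + 1) (by lia) (by lia)
  rw [Nat.cast_pred (by lia)] at hb1
  rw [pathRatio_succ_add ha1.ne' hb'.ne' hab'.ne']
  exact lt_add_of_pos_right _ (by positivity)

end PathRatio

section RootedPaths

variable {V : Type*} {G : SimpleGraph V}

lemma exists_adj_and_connected_induce_compl [Nontrivial V] (hG : G.Connected) (r : V) :
    ∃ (A : Set V) (a : V), a ∈ A ∧ r ∉ A ∧ G.Adj r a ∧
      (G.induce A).Connected ∧ (G.induce Aᶜ).Connected := by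
  obtain ⟨T, hTG, hT⟩ := hG.exists_isTree_le
  obtain ⟨a, hra⟩ := hT.connected.preconnected.exists_adj_of_nontrivial r
  set F := T.deleteEdges {s(a, r)}
  have hbridge : ¬ F.Reachable a r :=
    SimpleGraph.isBridge_iff.1 (SimpleGraph.isAcyclic_iff_forall_isBridge.1 hT.isAcyclic hra.symm)
  have hreach (v : V) : F.Reachable a v ∨ F.Reachable r v := by
    induction (SimpleGraph.reachable_iff_reflTransGen r v).1 (hT.connected.preconnected r v) with
    | refl => exact .inr .rfl
    | @tail u w _ huw ih =>
      by_cases he : s(u, w) = s(a, r)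
      · obtain ⟨-, rfl⟩ | ⟨-, rfl⟩ := Sym2.eq_iff.1 he
        exacts [.inr .rfl, .inl .rfl]
      · have huwF : F.Reachable u w :=
          SimpleGraph.Adj.reachable (SimpleGraph.deleteEdges_adj.2 ⟨huw, he⟩)
        exact ih.imp (·.trans huwF) (·.trans huwF)
  have hFG : F ≤ G := (SimpleGraph.deleteEdges_le _).trans hTG
  have hcompl : (F.connectedComponentMk a).suppᶜ = (F.connectedComponentMk r).supp := by
    ext v
    simp only [Set.mem_compl_iff, SimpleGraph.ConnectedComponent.mem_supp_iff,
      SimpleGraph.ConnectedComponent.eq]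
    exact ⟨fun hva ↦ ((hreach v).resolve_left fun h ↦ hva h.symm).symm,
      fun hvr hva ↦ hbridge (hva.symm.trans hvr)⟩
  have hconn (C : F.ConnectedComponent) : (G.induce C.supp).Connected :=
    C.connected_toSimpleGraph.mono fun _ _ h ↦ hFG h
  refine ⟨(F.connectedComponentMk a).supp, a, rfl, fun hr ↦ ?_, hTG hra, hconn _, ?_⟩
  · exact hbridge (SimpleGraph.ConnectedComponent.exact hr).symm
  · exact hcompl ▸ hconn _

/-- `G` is a path, one of whose two ends is `r`. -/
def IsPathFrom (G : SimpleGraph V) (r : V) : Prop :=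
  ∃ (m : ℕ) (φ : SimpleGraph.pathGraph (m + 1) ≃g G), φ 0 = r

lemma isPathFrom_of_subsingleton [Subsingleton V] (G : SimpleGraph V) (r : V) :
    IsPathFrom G r := by
  have : Unique V := uniqueOfSubsingleton r
  let e : Fin 1 ≃ V := .ofUnique _ _
  exact ⟨0, ⟨e, fun {i j : Fin 1} ↦ by simp [Subsingleton.elim i j]⟩,
    Subsingleton.elim _ _⟩

lemma IsPathFrom.of_induce_compl_singleton {r a : V} (har : a ∈ ({r}ᶜ : Set V))
    (hpath : IsPathFrom (G.induce {r}ᶜ) ⟨a, har⟩) (hadj : ∀ u, G.Adj r u ↔ u = a) :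
    IsPathFrom G r := by
  obtain ⟨m, φ, hφ⟩ := hpath
  set f : Fin (m + 2) → V := Fin.cons r fun i ↦ (φ i : V)
  have hrange : Set.range (fun i ↦ (φ i : V)) = {r}ᶜ := by
    rw [Set.range_comp' Subtype.val φ, φ.surjective.range_eq, Set.image_univ, Subtype.range_coe]
  have hbij : f.Bijective := by
    refine ⟨Fin.cons_injective_iff.2 ⟨?_, Subtype.val_injective.comp φ.injective⟩, ?_⟩
    · simp [hrange]
    · rw [← Set.range_eq_univ, Fin.range_cons, hrange, Set.insert_eq, Set.union_compl_self]
  have hr_adj (i : Fin (m + 1)) : G.Adj r (φ i) ↔ (i : ℕ) = 0 := by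
    rw [hadj, Fin.val_eq_zero_iff, ← φ.injective.eq_iff, hφ, Subtype.ext_iff]
  have hφ_adj (i j : Fin (m + 1)) : G.Adj (φ i) (φ j) ↔ (i : ℕ) + 1 = j ∨ (j : ℕ) + 1 = i := by
    rw [← SimpleGraph.pathGraph_adj, ← φ.map_adj_iff, SimpleGraph.induce_adj]
  have hf_adj (i j : Fin (m + 2)) :
      G.Adj (f i) (f j) ↔ (SimpleGraph.pathGraph (m + 2)).Adj i j := by
    rw [SimpleGraph.pathGraph_adj]
    cases i using Fin.cases <;> cases j using Fin.cases <;>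
      simp [f, hr_adj, G.adj_comm _ r, hφ_adj]
  exact ⟨m + 1, ⟨.ofBijective f hbij, hf_adj _ _⟩, rfl⟩

lemma IsPathFrom.nonempty_iso [Fintype V] {r : V} (h : IsPathFrom G r) :
    Nonempty (G ≃g SimpleGraph.pathGraph (Fintype.card V)) := by
  obtain ⟨m, φ, -⟩ := h
  rw [← Fintype.card_congr φ.toEquiv, Fintype.card_fin]
  exact ⟨φ.symm⟩

end RootedPaths

section NeighborSums

open Matrix

variable {V : Type} [Fintype V] (G : SimpleGraph V) (x : V → ℝ)

open scoped Classical in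
lemma adjMat_eq_adjMatrix : adjMat G = G.adjMatrix ℝ := rfl

open scoped Classical in
lemma adjMat_mulVec_apply (v : V) : (adjMat G *ᵥ x) v = ∑ u with G.Adj v u, x u := by
  rw [adjMat_eq_adjMatrix, SimpleGraph.adjMatrix_mulVec_apply, SimpleGraph.neighborFinset_eq_filter]

variable {G x}

lemma adjMat_nonneg (v u : V) : 0 ≤ adjMat G v u := by
  classical
  rw [adjMat_eq_adjMatrix, SimpleGraph.adjMatrix_apply]
  positivity

lemma adjMat_mulVec_nonneg (hx : ∀ v, 0 ≤ x v) (v : V) : 0 ≤ (adjMat G *ᵥ x) v := by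
  rw [adjMat_mulVec_apply]
  exact Finset.sum_nonneg fun u _ ↦ hx u

lemma le_adjMat_mulVec_of_adj (hx : ∀ v, 0 ≤ x v) {v u : V} (hvu : G.Adj v u) :
    x u ≤ (adjMat G *ᵥ x) v := by
  classical
  rw [adjMat_mulVec_apply]
  exact Finset.single_le_sum (fun w _ ↦ hx w) (by simpa using hvu)

open scoped Classical in
lemma adjMat_mulVec_eq_induce_add {A : Set V} [Fintype A] (v : A) :
    (adjMat G *ᵥ x) v =
      (adjMat (G.induce A) *ᵥ fun w ↦ x w) v + ∑ u : {u // u ∉ A}, adjMat G v u * x u := by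
  change ∑ u, adjMat G v u * x u = ∑ u : A, adjMat G v u * x u + _
  convert (Fintype.sum_subtype_add_sum_subtype (· ∈ A) fun u ↦ adjMat G v u * x u).symm

lemma adjMat_induce_mulVec_le (hx : ∀ v, 0 ≤ x v) {A : Set V} [Fintype A] (v : A) :
    (adjMat (G.induce A) *ᵥ fun w ↦ x w) v ≤ (adjMat G *ᵥ x) v := by
  rw [adjMat_mulVec_eq_induce_add]
  exact le_add_of_nonneg_right <| Finset.sum_nonneg fun u _ ↦
    mul_nonneg (adjMat_nonneg (v : V) u) (hx u)

lemma adjMat_induce_mulVec_add_le (hx : ∀ v, 0 ≤ x v) {A : Set V} [Fintype A] (v : A) {u : V}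
    (hu : u ∉ A) (hvu : G.Adj v u) :
    (adjMat (G.induce A) *ᵥ fun w ↦ x w) v + x u ≤ (adjMat G *ᵥ x) v := by
  classical
  have hxu : adjMat G v u * x u = x u := by simp [adjMat, hvu]
  rw [adjMat_mulVec_eq_induce_add, ← hxu]
  gcongr
  exact Finset.single_le_sum (f := fun u : {u // u ∉ A} ↦ adjMat G v u * x u)
    (fun u _ ↦ mul_nonneg (adjMat_nonneg (v : V) u) (hx u)) (Finset.mem_univ ⟨u, hu⟩)

end NeighborSums

section Comparison

open Matrix

variable {V : Type} [Fintype V] {G : SimpleGraph V} {x : V → ℝ} {θ : ℝ}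

lemma pathRatio_succ_mul_le (hx : ∀ v, 0 ≤ x v) {A : Set V} [Fintype A] (a : A) {r : V} {k : ℕ}
    (hr : r ∉ A) (hra : G.Adj r a) (hk : 0 < pathRatio θ (k + 1))
    (hA : pathRatio θ k * x a ≤ (adjMat (G.induce A) *ᵥ fun w ↦ x w) a)
    (ha : (adjMat G *ᵥ x) a ≤ 2 * Real.cos θ * x a) :
    pathRatio θ (k + 1) * x r ≤ x a := by
  have hroot := adjMat_induce_mulVec_add_le hx a hr hra.symm
  rw [← le_inv_mul_iff₀ hk, inv_pathRatio_succ hk.ne']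
  linarith

lemma pathRatio_add_mul_le (hx : ∀ v, 0 ≤ x v) {A : Set V} [Fintype A] [Fintype ↥Aᶜ]
    {a r : V} {k l : ℕ} (haA : a ∈ A) (hrA : r ∉ A) (hra : G.Adj r a)
    (hk : 0 < pathRatio θ (k + 1))
    (hA : pathRatio θ k * x a ≤ (adjMat (G.induce A) *ᵥ fun w ↦ x w) ⟨a, haA⟩)
    (hB : pathRatio θ l * x r ≤ (adjMat (G.induce Aᶜ) *ᵥ fun w ↦ x w) ⟨r, hrA⟩)
    (ha : (adjMat G *ᵥ x) a ≤ 2 * Real.cos θ * x a) :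
    (pathRatio θ (k + 1) + pathRatio θ l) * x r ≤ (adjMat G *ᵥ x) r := by
  have hxa := pathRatio_succ_mul_le hx ⟨a, haA⟩ hrA hra hk hA ha
  have hroot := adjMat_induce_mulVec_add_le hx (A := Aᶜ) ⟨r, hrA⟩ (not_not_intro haA) hra
  linarith

lemma card_add_card_compl (A : Set V) [Fintype A] [Fintype ↥Aᶜ] :
    Fintype.card A + Fintype.card ↥Aᶜ = Fintype.card V := by
  classical
  rw [← Fintype.card_sum, Fintype.card_congr (Equiv.Set.sumCompl A)]

theorem pathRatio_card_mul_le (hG : G.Connected) (hθ : 0 < θ)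
    (hcard : (Fintype.card V + 1 : ℕ) * θ ≤ Real.pi) (hx : ∀ v, 0 ≤ x v) (r : V)
    (hsup : ∀ v, v ≠ r → (adjMat G *ᵥ x) v ≤ 2 * Real.cos θ * x v) :
    pathRatio θ (Fintype.card V) * x r ≤ (adjMat G *ᵥ x) r := by
  classical
  induction hn : Fintype.card V using Nat.strong_induction_on generalizing V with
  | _ n ih =>
  subst hn
  obtain _ | _ := subsingleton_or_nontrivial V
  · rw [Fintype.card_eq_one_iff_nonempty_unique.2 ⟨uniqueOfSubsingleton r⟩, pathRatio_one, zero_mul]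
    exact adjMat_mulVec_nonneg hx r
  obtain ⟨A, a, haA, hrA, hra, hconnA, hconnB⟩ := exists_adj_and_connected_induce_compl hG r
  have hA : 0 < Fintype.card A := Fintype.card_pos_iff.2 ⟨a, haA⟩
  have hB : 0 < Fintype.card ↥Aᶜ := Fintype.card_pos_iff.2 ⟨r, hrA⟩
  have hAB := card_add_card_compl A
  have hθA : (Fintype.card A + 1 : ℕ) * θ < Real.pi := lt_of_lt_of_le (by gcongr; lia) hcard
  have hθB : (Fintype.card ↥Aᶜ + 1 : ℕ) * θ < Real.pi := lt_of_lt_of_le (by gcongr; lia) hcard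
  have ihA := ih _ (by lia) hconnA hθA.le (fun v ↦ hx v) ⟨a, haA⟩
    (fun v _ ↦ (adjMat_induce_mulVec_le hx v).trans (hsup v fun h ↦ hrA (h ▸ v.2))) rfl
  have ihB := ih _ (by lia) hconnB hθB.le (fun v ↦ hx v) ⟨r, hrA⟩
    (fun v hv ↦ (adjMat_induce_mulVec_le hx v).trans (hsup v fun h ↦ hv (Subtype.ext h))) rfl
  rw [← hAB] at hcard ⊢
  calc pathRatio θ (Fintype.card A + Fintype.card ↥Aᶜ) * x r
      ≤ (pathRatio θ (Fintype.card A + 1) + pathRatio θ (Fintype.card ↥Aᶜ)) * x r :=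
        mul_le_mul_of_nonneg_right (pathRatio_add_le hθ hA hB hcard) (hx r)
    _ ≤ (adjMat G *ᵥ x) r :=
        pathRatio_add_mul_le hx haA hrA hra (pathRatio_pos hθ (by lia) hθA) ihA ihB
          (hsup a hra.ne')

lemma pathRatio_card_succ_add_mul_le (hθ : 0 < θ)
    (hcard : (Fintype.card V + 1 : ℕ) * θ ≤ Real.pi) (hx : ∀ v, 0 ≤ x v) {A : Set V} [Fintype A]
    [Fintype ↥Aᶜ] {a r : V} (haA : a ∈ A) (hrA : r ∉ A) (hra : G.Adj r a)
    (hconnA : (G.induce A).Connected) (hconnB : (G.induce Aᶜ).Connected)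
    (hsup : ∀ v, v ≠ r → (adjMat G *ᵥ x) v ≤ 2 * Real.cos θ * x v) :
    (pathRatio θ (Fintype.card A + 1) + pathRatio θ (Fintype.card ↥Aᶜ)) * x r ≤
      (adjMat G *ᵥ x) r := by
  have hA : Fintype.card A < Fintype.card V := Fintype.card_subtype_lt hrA
  have hB : Fintype.card ↥Aᶜ < Fintype.card V := Fintype.card_subtype_lt (not_not_intro haA)
  have hθA : (Fintype.card A + 1 : ℕ) * θ < Real.pi := lt_of_lt_of_le (by gcongr) hcard
  have hθB : (Fintype.card ↥Aᶜ + 1 : ℕ) * θ < Real.pi := lt_of_lt_of_le (by gcongr) hcard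
  have hposA : 0 < Fintype.card A := Fintype.card_pos_iff.2 ⟨a, haA⟩
  have ihA := pathRatio_card_mul_le hconnA hθ hθA.le (fun v ↦ hx v) ⟨a, haA⟩ fun v _ ↦
    (adjMat_induce_mulVec_le hx v).trans (hsup v fun h ↦ hrA (h ▸ v.2))
  have ihB := pathRatio_card_mul_le hconnB hθ hθB.le (fun v ↦ hx v) ⟨r, hrA⟩ fun v hv ↦
    (adjMat_induce_mulVec_le hx v).trans (hsup v fun h ↦ hv (Subtype.ext h))
  exact pathRatio_add_mul_le hx haA hrA hra (pathRatio_pos hθ (by lia) hθA) ihA ihB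
    (hsup a hra.ne')

lemma eq_of_adj_of_mulVec_le (hx : ∀ v, 0 < x v) {a r : V} {k : ℕ} (har : a ∈ ({r}ᶜ : Set V))
    [Fintype ↥({r}ᶜ : Set V)] (hra : G.Adj r a) (hk : 0 < pathRatio θ (k + 1))
    (hA : pathRatio θ k * x a ≤ (adjMat (G.induce {r}ᶜ) *ᵥ fun w ↦ x w) ⟨a, har⟩)
    (ha : (adjMat G *ᵥ x) a ≤ 2 * Real.cos θ * x a)
    (hr : (adjMat G *ᵥ x) r ≤ pathRatio θ (k + 1) * x r) {u : V} (hru : G.Adj r u) : u = a := by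
  classical
  have hxa := pathRatio_succ_mul_le (fun v ↦ (hx v).le) ⟨a, har⟩ (not_not_intro rfl) hra hk hA ha
  by_contra hua
  have hsum : x u + x a ≤ (adjMat G *ᵥ x) r := by
    rw [adjMat_mulVec_apply, ← Finset.sum_pair hua]
    refine Finset.sum_le_sum_of_subset_of_nonneg ?_ fun v _ _ ↦ (hx v).le
    simp [Finset.insert_subset_iff, hra, hru]
  linarith [hx u]

lemma mulVec_induce_le_of_mulVec_le (hx : ∀ v, 0 ≤ x v) {a r : V} {k : ℕ}
    (har : a ∈ ({r}ᶜ : Set V)) [Fintype ↥({r}ᶜ : Set V)] (hra : G.Adj r a)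
    (hk : 0 < pathRatio θ (k + 1))
    (ha : (adjMat G *ᵥ x) a ≤ 2 * Real.cos θ * x a)
    (hr : (adjMat G *ᵥ x) r ≤ pathRatio θ (k + 1) * x r) :
    (adjMat (G.induce {r}ᶜ) *ᵥ fun w ↦ x w) ⟨a, har⟩ ≤ pathRatio θ k * x a := by
  have hroot := adjMat_induce_mulVec_add_le hx ⟨a, har⟩ (not_not_intro rfl) hra.symm
  have hxa := (le_adjMat_mulVec_of_adj hx hra).trans hr
  rw [← inv_mul_le_iff₀ hk, inv_pathRatio_succ hk.ne'] at hxa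
  linarith

lemma isPathFrom_of_isPathFrom_induce (hθ : 0 < θ) (hcard : Fintype.card V * θ < Real.pi)
    (hx : ∀ v, 0 < x v) {a r : V} (har : a ∈ ({r}ᶜ : Set V)) [Fintype ↥({r}ᶜ : Set V)]
    (hra : G.Adj r a) (hconn : (G.induce {r}ᶜ).Connected)
    (hsup : ∀ v, v ≠ r → (adjMat G *ᵥ x) v ≤ 2 * Real.cos θ * x v)
    (hr : (adjMat G *ᵥ x) r ≤ pathRatio θ (Fintype.card V) * x r)
    (hpath : (adjMat (G.induce {r}ᶜ) *ᵥ fun w ↦ x w) ⟨a, har⟩ ≤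
      pathRatio θ (Fintype.card ↥({r}ᶜ : Set V)) * x a → IsPathFrom (G.induce {r}ᶜ) ⟨a, har⟩) :
    IsPathFrom G r := by
  have hpos : 0 < Fintype.card ↥({r}ᶜ : Set V) := Fintype.card_pos_iff.2 ⟨a, har⟩
  have hk : Fintype.card ↥({r}ᶜ : Set V) + 1 = Fintype.card V := by
    classical
    rw [Fintype.card_compl_set, Set.card_singleton,
      Nat.sub_add_cancel (Fintype.card_pos_iff.2 ⟨r⟩)]
  rw [← hk] at hr hcard
  have hA := pathRatio_card_mul_le hconn hθ hcard.le (fun v ↦ (hx v).le) ⟨a, har⟩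
    fun v _ ↦ (adjMat_induce_mulVec_le (fun v ↦ (hx v).le) v).trans (hsup v v.2)
  have hq := pathRatio_pos hθ (by lia) hcard
  have ha := hsup a har
  exact .of_induce_compl_singleton har
    (hpath (mulVec_induce_le_of_mulVec_le (fun v ↦ (hx v).le) har hra hq ha hr))
    fun u ↦ ⟨eq_of_adj_of_mulVec_le hx har hra hq hA ha hr, fun hua ↦ hua ▸ hra⟩

lemma exists_adj_and_connected_induce_compl_singleton [Nontrivial V] (hG : G.Connected)
    (hθ : 0 < θ) (hcard : (Fintype.card V + 1 : ℕ) * θ < Real.pi) (hx : ∀ v, 0 < x v) (r : V)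
    (hsup : ∀ v, v ≠ r → (adjMat G *ᵥ x) v ≤ 2 * Real.cos θ * x v)
    (hr : (adjMat G *ᵥ x) r ≤ pathRatio θ (Fintype.card V) * x r) :
    ∃ a, G.Adj r a ∧ (G.induce {r}ᶜ).Connected := by
  classical
  obtain ⟨A, a, haA, hrA, hra, hconnA, hconnB⟩ := exists_adj_and_connected_induce_compl hG r
  suffices hB : Fintype.card ↥Aᶜ ≤ 1 by
    have hAc : Aᶜ = {r} := Set.eq_singleton_iff_unique_mem.2
      ⟨hrA, fun v hv ↦ congrArg Subtype.val (Fintype.card_le_one_iff.1 hB ⟨v, hv⟩ ⟨r, hrA⟩)⟩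
    exact ⟨a, hra, by rwa [← hAc, compl_compl]⟩
  by_contra! hB
  rw [← card_add_card_compl A] at hr
  have hlt := pathRatio_add_lt hθ (Fintype.card_pos_iff.2 ⟨(⟨a, haA⟩ : A)⟩) hB
    (by rwa [card_add_card_compl])
  have hle := pathRatio_card_succ_add_mul_le hθ hcard.le (fun v ↦ (hx v).le) haA hrA hra
    hconnA hconnB hsup
  exact (hle.trans hr).not_gt (mul_lt_mul_of_pos_right hlt (hx r))

theorem isPathFrom_of_mulVec_le (hG : G.Connected) (hθ : 0 < θ)
    (hcard : (Fintype.card V + 1 : ℕ) * θ < Real.pi) (hx : ∀ v, 0 < x v) (r : V)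
    (hsup : ∀ v, v ≠ r → (adjMat G *ᵥ x) v ≤ 2 * Real.cos θ * x v)
    (hr : (adjMat G *ᵥ x) r ≤ pathRatio θ (Fintype.card V) * x r) : IsPathFrom G r := by
  classical
  induction hn : Fintype.card V using Nat.strong_induction_on generalizing V with
  | _ n ih =>
  subst hn
  obtain _ | _ := subsingleton_or_nontrivial V
  · exact isPathFrom_of_subsingleton G r
  obtain ⟨a, hra, hconn⟩ :=
    exists_adj_and_connected_induce_compl_singleton hG hθ hcard hx r hsup hr
  have hlt : Fintype.card ↥({r}ᶜ : Set V) < Fintype.card V :=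
    Fintype.card_subtype_lt (not_not_intro rfl)
  refine isPathFrom_of_isPathFrom_induce hθ (lt_of_le_of_lt (by gcongr; lia) hcard) hx hra.ne'
    hra hconn hsup hr fun ha ↦ ih _ hlt hconn (lt_of_le_of_lt (by gcongr) hcard)
      (fun v ↦ hx v) ⟨a, hra.ne'⟩ (fun v _ ↦ ?_) ha rfl
  exact (adjMat_induce_mulVec_le (fun v ↦ (hx v).le) v).trans (hsup v v.2)

theorem nonempty_iso_pathGraph_of_mulVec_le (hG : G.Connected) (hx : ∀ v, 0 < x v)
    (hsup : ∀ v, (adjMat G *ᵥ x) v ≤ 2 * Real.cos (Real.pi / (Fintype.card V + 1)) * x v) :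
    Nonempty (G ≃g SimpleGraph.pathGraph (Fintype.card V)) := by
  classical
  obtain _ | _ := subsingleton_or_nontrivial V
  · exact (isPathFrom_of_subsingleton G hG.nonempty.some).nonempty_iso
  obtain ⟨r, hconn⟩ := hG.exists_connected_induce_compl_singleton_of_finite_nontrivial
  obtain ⟨a, hra⟩ := hG.preconnected.exists_adj_of_nontrivial r
  set θ := Real.pi / (Fintype.card V + 1)
  have hθ : 0 < θ := by positivity
  have hpi : (Fintype.card V + 1) * θ = Real.pi := mul_div_cancel₀ _ (by positivity)
  have hcard : Fintype.card V * θ < Real.pi := by linarith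
  have hq : pathRatio θ (Fintype.card V) = 2 * Real.cos θ :=
    pathRatio_eq_two_mul_cos (sin_natCast_mul_pos hθ Fintype.card_pos hcard).ne' hpi
  have hlt : Fintype.card ↥({r}ᶜ : Set V) < Fintype.card V :=
    Fintype.card_subtype_lt (not_not_intro rfl)
  refine (isPathFrom_of_isPathFrom_induce hθ hcard hx hra.ne' hra hconn (fun v _ ↦ hsup v)
    (hq ▸ hsup r) fun ha ↦ isPathFrom_of_mulVec_le hconn hθ
      (lt_of_le_of_lt (by gcongr; exact hlt) hcard) (fun v ↦ hx v) ⟨a, hra.ne'⟩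
      (fun v _ ↦ ?_) ha).nonempty_iso
  exact (adjMat_induce_mulVec_le (fun v ↦ (hx v).le) v).trans (hsup v)

end Comparison

section Perron

open Matrix

section Matrix

variable {n : Type*} [Fintype n] {A : Matrix n n ℝ}

lemma abs_mulVec_le (hA : ∀ i j, 0 ≤ A i j) (z : n → ℝ) (i : n) :
    |(A *ᵥ z) i| ≤ (A *ᵥ |z|) i :=
  (Finset.abs_sum_le_sum_abs _ _).trans_eq <|
    Finset.sum_congr rfl fun j _ ↦ by rw [abs_mul, abs_of_nonneg (hA i j), Pi.abs_apply]

lemma le_of_mulVec_eq_smul_of_mulVec_le (hA : ∀ i j, 0 ≤ A i j) {y z : n → ℝ} {c t : ℝ}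
    (hy : ∀ i, 0 < y i) (hAy : ∀ i, (A *ᵥ y) i ≤ c * y i) (hz : z ≠ 0) (hAz : A *ᵥ z = t • z) :
    t ≤ c := by
  obtain ⟨w, hw⟩ := Function.ne_iff.1 hz
  obtain ⟨i, -, hi⟩ :=
    Finset.exists_max_image Finset.univ (fun v ↦ |z v| / y v) ⟨w, Finset.mem_univ w⟩
  set M := |z i| / y i
  have hM : 0 < M := (div_pos (abs_pos.2 hw) (hy w)).trans_le (hi w (Finset.mem_univ w))
  have hzM : |z| ≤ M • y := fun v ↦ (div_le_iff₀ (hy v)).1 (hi v (Finset.mem_univ v))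
  have hzi : |z i| = M * y i := (div_mul_cancel₀ _ (hy i).ne').symm
  refine le_of_mul_le_mul_right ?_ (mul_pos hM (hy i))
  calc t * (M * y i) = t * |z i| := by rw [hzi]
    _ ≤ |(A *ᵥ z) i| := by
      rw [hAz, Pi.smul_apply, smul_eq_mul, abs_mul]
      gcongr
      exact le_abs_self t
    _ ≤ (A *ᵥ |z|) i := abs_mulVec_le hA z i
    _ ≤ (A *ᵥ (M • y)) i :=
      Finset.sum_le_sum fun j _ ↦ mul_le_mul_of_nonneg_left (hzM j) (hA i j)
    _ = M * (A *ᵥ y) i := by rw [mulVec_smul, Pi.smul_apply, smul_eq_mul]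
    _ ≤ M * (c * y i) := by gcongr; exact hAy i
    _ = c * (M * y i) := by ring

variable [DecidableEq n]

lemma mem_spectrum_iff_exists_mulVec_eq_smul {t : ℝ} :
    t ∈ spectrum ℝ A ↔ ∃ z : n → ℝ, z ≠ 0 ∧ A *ᵥ z = t • z := by
  rw [← spectrum_toLin', ← Module.End.hasEigenvalue_iff_mem_spectrum,
    Module.End.hasEigenvalue_iff, Submodule.ne_bot_iff]
  simp only [Module.End.mem_eigenspace_iff, toLin'_apply, and_comm]

lemma posSemidef_smul_one_sub (hA : A.IsHermitian) {c : ℝ} (hc : ∀ t ∈ spectrum ℝ A, t ≤ c) :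
    (c • (1 : Matrix n n ℝ) - A).PosSemidef := by
  rw [posSemidef_iff_isHermitian_and_spectrum_nonneg, ← Algebra.algebraMap_eq_smul_one,
    ← spectrum.singleton_sub_eq]
  refine ⟨(isHermitian_diagonal _).sub hA, ?_⟩
  rintro _ ⟨_, rfl, t, ht, rfl⟩
  exact sub_nonneg.2 (hc t ht)

/-- The vector `|z|` has at least the Rayleigh quotient of `z`, which is already maximal. -/
lemma mulVec_abs_eq_smul_abs (hA : A.IsHermitian) (hA0 : ∀ i j, 0 ≤ A i j) {c : ℝ}
    (hc : ∀ t ∈ spectrum ℝ A, t ≤ c) {z : n → ℝ} (hz : A *ᵥ z = c • z) :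
    A *ᵥ |z| = c • |z| := by
  have hpos := posSemidef_smul_one_sub hA hc
  have hmulVec : (c • (1 : Matrix n n ℝ) - A) *ᵥ |z| = c • |z| - A *ᵥ |z| := by
    rw [sub_mulVec, smul_mulVec, one_mulVec]
  have hRayleigh : |z| ⬝ᵥ (c • |z|) ≤ |z| ⬝ᵥ (A *ᵥ |z|) :=
    calc |z| ⬝ᵥ (c • |z|) = z ⬝ᵥ (A *ᵥ z) := by
          simp only [hz, dotProduct, Pi.smul_apply, Pi.abs_apply, smul_eq_mul, mul_left_comm _ c,
            abs_mul_abs_self]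
      _ ≤ |z| ⬝ᵥ (A *ᵥ |z|) := Finset.sum_le_sum fun i _ ↦ by
          calc z i * (A *ᵥ z) i ≤ |z i| * |(A *ᵥ z) i| := by
                rw [← abs_mul]; exact le_abs_self _
            _ ≤ |z| i * (A *ᵥ |z|) i := by
                rw [Pi.abs_apply]; gcongr; exact abs_mulVec_le hA0 z i
  have hzero : star |z| ⬝ᵥ ((c • (1 : Matrix n n ℝ) - A) *ᵥ |z|) = 0 := by
    refine le_antisymm ?_ (hpos.dotProduct_mulVec_nonneg _)
    rw [hmulVec, star_trivial, dotProduct_sub]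
    exact sub_nonpos.2 hRayleigh
  rw [hpos.dotProduct_mulVec_zero_iff, hmulVec, sub_eq_zero] at hzero
  exact hzero.symm

end Matrix

variable {V : Type} [Fintype V] {G : SimpleGraph V}

variable (G) in
lemma isHermitian_adjMat : (adjMat G).IsHermitian := by
  classical
  rw [adjMat_eq_adjMatrix, IsHermitian, conjTranspose_eq_transpose_of_trivial]
  exact G.isSymm_adjMatrix

lemma pos_of_adjMat_mulVec_eq_smul (hG : G.Connected) {x : V → ℝ} (hx : ∀ v, 0 ≤ x v)
    (hx0 : x ≠ 0) {c : ℝ} (hc : adjMat G *ᵥ x = c • x) (v : V) : 0 < x v := by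
  refine (hx v).lt_of_ne' fun hv ↦ hx0 (funext fun u ↦ ?_)
  induction (SimpleGraph.reachable_iff_reflTransGen v u).1 (hG.preconnected v u) with
  | refl => exact hv
  | @tail u w _ huw ih =>
    refine le_antisymm ?_ (hx w)
    calc x w ≤ (adjMat G *ᵥ x) u := le_adjMat_mulVec_of_adj hx huw
      _ = 0 := by rw [hc, Pi.smul_apply, ih, Pi.zero_apply, smul_zero]

variable (G) in
lemma specRad_eq_sSup_spectrum [DecidableEq V] : specRad G = sSup (spectrum ℝ (adjMat G)) :=
  congrArg sSup (Set.ext fun _ ↦ mem_spectrum_iff_exists_mulVec_eq_smul.symm)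

lemma nonempty_spectrum_adjMat [DecidableEq V] [Nonempty V] :
    (spectrum ℝ (adjMat G)).Nonempty := by
  rw [(isHermitian_adjMat G).spectrum_real_eq_range_eigenvalues]
  exact Set.range_nonempty _

theorem exists_pos_adjMat_mulVec_eq_specRad_smul (hG : G.Connected) :
    ∃ x : V → ℝ, (∀ v, 0 < x v) ∧ adjMat G *ᵥ x = specRad G • x := by
  classical
  have := hG.nonempty
  have hfin : (spectrum ℝ (adjMat G)).Finite := finite_real_spectrum
  obtain ⟨z, hz0, hz⟩ := mem_spectrum_iff_exists_mulVec_eq_smul.1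
    (nonempty_spectrum_adjMat.csSup_mem hfin)
  have habs := mulVec_abs_eq_smul_abs (isHermitian_adjMat G) adjMat_nonneg
    (fun t ht ↦ le_csSup hfin.bddAbove ht) hz
  rw [specRad_eq_sSup_spectrum]
  exact ⟨|z|, pos_of_adjMat_mulVec_eq_smul hG (fun v ↦ abs_nonneg (z v)) (by simpa using hz0) habs,
    habs⟩

lemma specRad_le_of_mulVec_le [Nonempty V] {y : V → ℝ} {c : ℝ} (hy : ∀ v, 0 < y v)
    (hAy : ∀ v, (adjMat G *ᵥ y) v ≤ c * y v) : specRad G ≤ c := by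
  classical
  rw [specRad_eq_sSup_spectrum]
  refine csSup_le nonempty_spectrum_adjMat fun t ht ↦ ?_
  obtain ⟨z, hz0, hz⟩ := mem_spectrum_iff_exists_mulVec_eq_smul.1 ht
  exact le_of_mulVec_eq_smul_of_mulVec_le adjMat_nonneg hy hAy hz0 hz

end Perron

section Path

open Matrix SimpleGraph

lemma sin_sub_add_sin_add (a θ : ℝ) :
    Real.sin (a - θ) + Real.sin (a + θ) = 2 * Real.cos θ * Real.sin a := by
  rw [Real.sin_sub, Real.sin_add]
  ring

lemma adjMat_pathGraph_mulVec_le {n : ℕ} {f : ℕ → ℝ} (hf : ∀ k ≤ n + 1, 0 ≤ f k) (i : Fin n) :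
    (adjMat (pathGraph n) *ᵥ fun j ↦ f (j + 1)) i ≤ f i + f (i + 2) := by
  classical
  rw [adjMat_mulVec_apply, ← Finset.sum_pair (by lia : (i : ℕ) ≠ i + 2),
    ← Finset.sum_image (f := f) (g := fun j : Fin n ↦ (j + 1 : ℕ))
      fun j _ k _ h ↦ Fin.ext (Nat.succ_injective h)]
  refine Finset.sum_le_sum_of_subset_of_nonneg (Finset.image_subset_iff.2 fun j hj ↦ ?_)
    fun k hk _ ↦ hf k ?_
  · simp only [Finset.mem_filter_univ, pathGraph_adj] at hj
    simp only [Finset.mem_insert, Finset.mem_singleton]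
    lia
  · simp only [Finset.mem_insert, Finset.mem_singleton] at hk
    lia

lemma specRad_pathGraph_le {n : ℕ} (hn : 0 < n) :
    specRad (pathGraph n) ≤ 2 * Real.cos (Real.pi / (n + 1)) := by
  have : NeZero n := ⟨hn.ne'⟩
  set θ := Real.pi / (n + 1)
  have hθ : 0 < θ := by positivity
  have hpi : (n + 1 : ℕ) * θ = Real.pi := by
    rw [Nat.cast_add_one]
    exact mul_div_cancel₀ _ (by positivity)
  refine specRad_le_of_mulVec_le (y := fun i : Fin n ↦ Real.sin ((i + 1 : ℕ) * θ))
    (fun i ↦ ?_) fun i ↦ ?_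
  · exact sin_natCast_mul_pos hθ (by lia) (hpi ▸ by gcongr; exact i.2)
  · refine (adjMat_pathGraph_mulVec_le (f := fun k ↦ Real.sin (k * θ)) (fun k hk ↦
      sin_natCast_mul_nonneg hθ.le (hpi ▸ by gcongr)) i).trans_eq ?_
    rw [← sin_sub_add_sin_add]
    congr 2 <;> push_cast <;> ring

lemma ncard_setOf_val_eq_count (n : ℕ) (p : ℕ → Prop) [DecidablePred p] :
    {i : Fin n | p i}.ncard = Nat.count p n := by
  rw [← Set.ncard_image_of_injective _ Fin.val_injective, Nat.count_eq_card_filter_range,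
    ← Set.ncard_coe_finset]
  congr 1
  ext k
  simp [Fin.exists_iff, and_comm]

lemma count_le_of_forall_not_and_and {p : ℕ → Prop} [DecidablePred p]
    (hp : ∀ k, ¬ (p k ∧ p (k + 1) ∧ p (k + 2))) (n : ℕ) : Nat.count p n ≤ (2 * n + 2) / 3 := by
  induction n using Nat.strong_induction_on with
  | _ n ih =>
  obtain hn | ⟨m, rfl⟩ : n ≤ 2 ∨ ∃ m, n = m + 3 := by
    obtain hn | hn := le_or_gt n 2
    exacts [.inl hn, .inr ⟨n - 3, by lia⟩]
  · exact (Nat.count_le p).trans (by lia)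
  · have hm := ih m (by lia)
    have hpm := hp m
    simp only [Nat.count_succ]
    split_ifs <;> lia

lemma count_mod_three_ne_two (n : ℕ) : Nat.count (· % 3 ≠ 2) n = (2 * n + 2) / 3 := by
  induction n with
  | zero => simp
  | succ n ih =>
    rw [Nat.count_succ, ih]
    split_ifs <;> lia

lemma isDissocSet_pathGraph_mod_three_ne_two (n : ℕ) :
    IsDissocSet (pathGraph n) {i | (i : ℕ) % 3 ≠ 2} := by
  intro v hv
  rw [Set.ncard_le_one]
  rintro a ⟨ha, hva⟩ b ⟨hb, hvb⟩
  rw [pathGraph_adj] at hva hvb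
  rw [Set.mem_ofPred_eq] at ha hb hv
  exact Fin.ext (by lia)

lemma IsDissocSet.not_consecutive {n : ℕ} {S : Set (Fin n)} (hS : IsDissocSet (pathGraph n) S)
    (k : ℕ) : ¬ (k ∈ Fin.val '' S ∧ k + 1 ∈ Fin.val '' S ∧ k + 2 ∈ Fin.val '' S) := by
  rintro ⟨⟨a, ha, rfl⟩, ⟨b, hb, hab⟩, ⟨c, hc, hac⟩⟩
  have hle := hS b hb
  rw [Set.ncard_le_one] at hle
  have h := hle a ⟨ha, pathGraph_adj.2 (.inr hab.symm)⟩ c ⟨hc, pathGraph_adj.2 (.inl (by lia))⟩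
  lia

lemma dissNum_pathGraph (n : ℕ) : dissNum (pathGraph n) = (2 * n + 2) / 3 := by
  classical
  refine IsGreatest.csSup_eq ⟨⟨_, isDissocSet_pathGraph_mod_three_ne_two n, ?_⟩, ?_⟩
  · rw [← count_mod_three_ne_two, ← ncard_setOf_val_eq_count]
  · rintro _ ⟨S, hS, rfl⟩
    have hSval : S = {i : Fin n | (i : ℕ) ∈ Fin.val '' S} :=
      (Fin.val_injective.preimage_image S).symm
    rw [hSval, ncard_setOf_val_eq_count]
    exact count_le_of_forall_not_and_and hS.not_consecutive n

end Path

theorem minimum_spectral_radius_diss_eq_ceil_two_thirds_general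
    {V : Type} [Fintype V] (G : SimpleGraph V) (hconn : G.Connected)
    (hle : specRad G ≤ specRad (SimpleGraph.pathGraph (Fintype.card V))) :
    Nonempty (G ≃g SimpleGraph.pathGraph (Fintype.card V)) := by
  have := hconn.nonempty
  obtain ⟨x, hx, hAx⟩ := exists_pos_adjMat_mulVec_eq_specRad_smul hconn
  refine nonempty_iso_pathGraph_of_mulVec_le hconn hx fun v ↦ ?_
  rw [hAx, Pi.smul_apply, smul_eq_mul]
  exact mul_le_mul_of_nonneg_right (hle.trans (specRad_pathGraph_le Fintype.card_pos)) (hx v).le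

/-- If a connected graph `G` of order `n` with dissociation number `⌈2n/3⌉ ≥ 2` attains
the minimum spectral radius among all connected graphs of order `n` with dissociation
number `⌈2n/3⌉`, then `G` is isomorphic to the path `P_n`.
(Here `⌈2n/3⌉ = (2n+2)/3` in `ℕ`.) -/
theorem minimum_spectral_radius_diss_eq_ceil_two_thirds
    {n : ℕ} (hn : 0 < n) (hk : 2 ≤ (2 * n + 2) / 3)
    {V : Type} [Fintype V] (G : SimpleGraph V)
    (hcard : Fintype.card V = n) (hconn : G.Connected)
    (hdiss : dissNum G = (2 * n + 2) / 3)
    (hmin : ∀ H : SimpleGraph (Fin n), H.Connected → dissNum H = (2 * n + 2) / 3 →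
      specRad G ≤ specRad H) :
    Nonempty (G ≃g SimpleGraph.pathGraph n) := by
  obtain ⟨m, rfl⟩ := Nat.exists_eq_add_one.2 hn
  have hle := hmin _ (SimpleGraph.pathGraph_connected m) (dissNum_pathGraph _)
  rw [← hcard] at hle ⊢
  exact minimum_spectral_radius_diss_eq_ceil_two_thirds_general G hconn hle
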